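/- arXiv:1402.1228 — 2 statements merged into one kernel-verified Lean document; each statement's English description precedes it below -/
import Mathlib

section
/- Let p be an odd prime, ε the fundamental unit of ℚ(√(2p)), and k = ℚ(√(2p), i). The following are equivalent: (a) ε is a square in ℚ(√p, √2); (b) the Hasse unit index Q_k = [O_k^× : ⟨i⟩·O_{ℚ(√(2p))}^×] equals 2; (c) ε has norm +1. -/
/-!
Put `s = √(2p)` and write `conj` for complex conjugation. All three fields have explicit rational
coordinates, and the integers of `ℚ(s)` lie in `ℤ[s]` (`int_coords`). Conditions (a) and (b) are
each shown to be equivalent to (c).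

If `N(ε) = 1`, write `ε = (2u + 1) + 2cs`; then `u(u + 1) = 2pc²` is a product of coprime integers,
so `u` and `u + 1` are squares up to complementary factors of `2p`. The splitting `{1, 2p}` would
make `ε` a square in `ℚ(s)`, against fundamentality; the splitting `{2, p}` gives
`√ε = x√2 + y√p` (`sqrt_fundamental`), which is (a). Conversely `ε = (α + β√2)²` with
`α, β ∈ ℚ(s)` forces `αβ = 0`, because `√2 ∉ ℚ(s)`, so `ε` is totally positive and has norm `1`
(`norm_one_of_sq`).

For the unit index, `u / conj u` is a fourth root of unity for every unit `u` of `k`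
(`unit_ratio`), and it is `±1` exactly on `⟨i⟩·O_{ℚ(s)}ˣ` (`mem_WE_iff`). Hence the index is `2`
precisely when `±i` is attained. If `N(ε) = 1`, the unit `η = (1 + i)√ε/√2` of `k` attains it
(`index_two_of_norm_one`). If it is attained at `u`, then `u² = ±i·ε^n` with `ε^n = u · conj u`
totally positive; `N(ε) = -1` would make `n` even and `u/ε^(n/2)` a primitive eighth root of unity
in `k`, which is impossible as `√2 ∉ k` (`norm_one_of_index_two`).
-/


/- STATEMENT 6: Let p be an odd prime, ε the fundamental unit of ℚ(√(2p)),
k = ℚ(√(2p), i). TFAE: (a) ε is a square in ℚ(√p, √2); (b) the Hasse unit index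
Q_k = [O_k^× : ⟨i⟩·O_{ℚ(√(2p))}^×] equals 2; (c) N(ε) = +1. -/

open Complex NumberField IntermediateField nonZeroDivisors

noncomputable section

/-- ℚ(√(2p)) as a subfield of ℂ. -/
def Q2p (p : ℕ) : IntermediateField ℚ ℂ := ℚ⟮(Real.sqrt (2 * p) : ℂ)⟯

/-- k = ℚ(√(2p), i) as a subfield of ℂ. -/
def kfield (p : ℕ) : IntermediateField ℚ ℂ := ℚ⟮(Real.sqrt (2 * p) : ℂ), (Complex.I : ℂ)⟯

/-- ℚ(√p, √2) as a subfield of ℂ. -/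
def Fbiq (p : ℕ) : IntermediateField ℚ ℂ := ℚ⟮(Real.sqrt p : ℂ), (Real.sqrt 2 : ℂ)⟯

/-- `ε` is the fundamental unit of a real quadratic field `Q` (a subfield of ℂ):
it is a real number > 1 and generates the unit group modulo ±1. -/
def IsFundamentalUnit {Q : IntermediateField ℚ ℂ} (ε : (𝓞 Q)ˣ) : Prop :=
  (∃ r : ℝ, 1 < r ∧ (((ε : 𝓞 Q) : Q) : ℂ) = (r : ℂ)) ∧
  ∀ u : (𝓞 Q)ˣ, ∃ n : ℤ, u = ε ^ n ∨ u = -ε ^ n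

/-- The subgroup ⟨i⟩·O_{ℚ(√(2p))}^× of O_k^×: the subgroup generated by the unit i
together with the units coming from ℚ(√(2p)). -/
def WE (p : ℕ) : Subgroup (𝓞 (kfield p))ˣ :=
  Subgroup.closure {u : (𝓞 (kfield p))ˣ |
    (((u : 𝓞 (kfield p)) : kfield p) : ℂ) = Complex.I ∨
    ∃ v : (𝓞 (Q2p p))ˣ, (((u : 𝓞 (kfield p)) : kfield p) : ℂ) =
      (((v : 𝓞 (Q2p p)) : Q2p p) : ℂ)}

/-! ### Explicit coordinates on the three fields -/

/-- The real number `√(2p)`. -/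
def rt (p : ℕ) : ℝ := Real.sqrt (2 * p)

lemma rt_sq (p : ℕ) : rt p ^ 2 = 2 * p := Real.sq_sqrt (by positivity)

lemma rt_sq_complex (p : ℕ) : (rt p : ℂ) ^ 2 = 2 * p := by exact_mod_cast rt_sq p

lemma rt_eq (p : ℕ) : rt p = Real.sqrt 2 * Real.sqrt p := by
  rw [rt, Real.sqrt_mul (by norm_num)]

lemma rt_pos {p : ℕ} (hp : p.Prime) : 0 < rt p :=
  Real.sqrt_pos.2 (by have := hp.pos; positivity)

lemma irrational_rt {p : ℕ} (hodd : Odd p) : Irrational (rt p) := by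
  have h : Irrational (Real.sqrt ((2 * p : ℕ) : ℝ)) := by
    rw [irrational_sqrt_natCast_iff]
    rintro ⟨n, hn⟩
    have h2 : 2 ∣ n := by
      have : 2 ∣ n * n := ⟨p, hn.symm⟩
      rcases (Nat.prime_two.dvd_mul).1 this with h | h <;> exact h
    obtain ⟨m, rfl⟩ := h2
    obtain ⟨t, rfl⟩ := hodd
    have : 2 * t + 1 = 2 * (m * m) := by linarith
    omega
  simpa [rt] using h

lemma rat_sq_ne {p : ℕ} (hodd : Odd p) (a b : ℚ) (hb : b ≠ 0) : a ^ 2 ≠ 2 * p * b ^ 2 := by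
  intro h
  apply irrational_rt hodd
  have hb' : (b : ℝ) ≠ 0 := by exact_mod_cast hb
  have h' : (a : ℝ) ^ 2 = 2 * p * (b : ℝ) ^ 2 := by exact_mod_cast h
  refine ⟨|a / b|, ?_⟩
  rw [rt, eq_comm, Real.sqrt_eq_iff_eq_sq (by positivity) (by positivity)]
  push_cast
  rw [sq_abs, div_pow, h']
  field_simp

lemma coord_unique {p : ℕ} (hodd : Odd p) {a b c d : ℚ}
    (h : (a : ℝ) + b * rt p = c + d * rt p) : a = c ∧ b = d := by
  have hbd : b = d := by
    by_contra hne
    apply irrational_rt hodd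
    refine ⟨(c - a) / (b - d), ?_⟩
    have : (b : ℝ) - d ≠ 0 := by
      rw [sub_ne_zero]; exact_mod_cast hne
    push_cast
    rw [div_eq_iff this]
    linarith
  refine ⟨?_, hbd⟩
  subst hbd
  have : (a : ℝ) = c := by linarith
  exact_mod_cast this

/-- `√2 ∉ ℚ(√(2p))`. -/
lemma sqrt_two_ne {p : ℕ} (hp : p.Prime) (hodd : Odd p) (a b : ℚ) :
    Real.sqrt 2 ≠ a + b * rt p := by
  intro h
  have h2 : ((2 : ℚ) : ℝ) + (0 : ℚ) * rt p
      = (a ^ 2 + 2 * p * b ^ 2 : ℚ) + (2 * a * b : ℚ) * rt p := by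
    have h3 := Real.sq_sqrt (show (0 : ℝ) ≤ 2 by norm_num)
    have := rt_sq p
    rw [h] at h3
    push_cast
    linear_combination - h3 + (b : ℝ) ^ 2 * this
  obtain ⟨h4, h5⟩ := coord_unique hodd h2
  have h6 : a = 0 ∨ b = 0 := by
    rcases mul_eq_zero.1 h5.symm with h | h
    · left; linarith
    · right; exact h
  rcases h6 with rfl | rfl
  · apply (Nat.Prime.irrational_sqrt hp)
    refine ⟨|1 / b|, ?_⟩
    have hb : (b : ℝ) ≠ 0 := by
      rintro h; rw [Rat.cast_eq_zero] at h; subst h; norm_num at h4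
    rw [eq_comm, Real.sqrt_eq_iff_eq_sq (by positivity) (by positivity)]
    have h4' : (2 : ℝ) = 2 * p * b ^ 2 := by exact_mod_cast (by linarith : (2 : ℚ) = 2 * p * b ^ 2)
    push_cast
    rw [sq_abs, div_pow]
    field_simp
    linarith
  · apply irrational_sqrt_two
    exact ⟨a, by simpa using h.symm⟩

/-- The embedding of the abstract quadratic algebra `ℚ[ω]/(ω² = 2p)` in `ℂ` sending `ω` to
`√(2p)`. -/
def quadHom (p : ℕ) : QuadraticAlgebra ℚ (2 * p) 0 →ₐ[ℚ] ℂ :=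
  QuadraticAlgebra.lift ⟨(rt p : ℂ), by
    rw [← sq, rt_sq_complex, Algebra.smul_def]; simp⟩

lemma quadHom_apply (p : ℕ) (z : QuadraticAlgebra ℚ (2 * p) 0) :
    quadHom p z = ((z.re + z.im * rt p : ℝ) : ℂ) := by
  simp [quadHom, QuadraticAlgebra.lift, Algebra.smul_def]

lemma quadHom_injective {p : ℕ} (hodd : Odd p) : Function.Injective (quadHom p) := by
  intro x y h
  rw [quadHom_apply, quadHom_apply, Complex.ofReal_inj] at h
  obtain ⟨h1, h2⟩ := coord_unique hodd h
  exact QuadraticAlgebra.ext h1 h2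

lemma isIntegral_of_sq {x : ℂ} {q : ℚ} (h : x ^ 2 = q) : IsIntegral ℚ x := by
  refine IsIntegral.of_pow two_pos ?_
  rw [h]
  exact isIntegral_algebraMap (R := ℚ) (A := ℂ) (x := q)

lemma quadHom_range (p : ℕ) : (quadHom p).range = (Q2p p).toSubalgebra := by
  have hint : IsIntegral ℚ (rt p : ℂ) :=
    isIntegral_of_sq (q := 2 * p) (by rw [rt_sq_complex]; push_cast; rfl)
  have hQ : (Q2p p).toSubalgebra = Algebra.adjoin ℚ {(rt p : ℂ)} :=
    IntermediateField.adjoin_simple_toSubalgebra_of_isAlgebraic hint.isAlgebraic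
  apply le_antisymm
  · rintro _ ⟨z, rfl⟩
    have h1 : (rt p : ℂ) ∈ Q2p p := IntermediateField.mem_adjoin_simple_self ℚ _
    change quadHom p z ∈ Q2p p
    rw [quadHom_apply]
    push_cast
    exact add_mem (SubfieldClass.ratCast_mem _ _) (mul_mem (SubfieldClass.ratCast_mem _ _) h1)
  · rw [hQ, Algebra.adjoin_le_iff]
    rintro _ rfl
    exact ⟨⟨0, 1⟩, by simp [quadHom_apply]⟩

lemma mem_Q2p {p : ℕ} {x : ℂ} : x ∈ Q2p p ↔ ∃ a b : ℚ, x = ((a + b * rt p : ℝ) : ℂ) := by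
  rw [← IntermediateField.mem_toSubalgebra, ← quadHom_range]
  constructor
  · rintro ⟨z, rfl⟩
    exact ⟨z.re, z.im, quadHom_apply p z⟩
  · rintro ⟨a, b, rfl⟩
    exact ⟨⟨a, b⟩, quadHom_apply p _⟩

/-- The field `ℚ(√(2p))` is the quadratic algebra `ℚ[ω]/(ω² = 2p)`. -/
def quadEquiv {p : ℕ} (hodd : Odd p) : QuadraticAlgebra ℚ (2 * p) 0 ≃ₐ[ℚ] Q2p p :=
  (AlgEquiv.ofInjective (quadHom p) (quadHom_injective hodd)).trans
    (Subalgebra.equivOfEq _ _ (quadHom_range p))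

lemma norm_Q2p {p : ℕ} (hodd : Odd p) (x : Q2p p) {a b : ℚ}
    (h : (x : ℂ) = ((a + b * rt p : ℝ) : ℂ)) : Algebra.norm ℚ x = a ^ 2 - 2 * p * b ^ 2 := by
  have hx : x = quadEquiv hodd ⟨a, b⟩ := by
    apply Subtype.ext
    rw [h]
    exact (quadHom_apply p ⟨a, b⟩).symm
  rw [hx, Algebra.norm_eq_of_algEquiv, Algebra.norm_apply]
  have := QuadraticAlgebra.det_toLinearMap_eq_norm (⟨a, b⟩ : QuadraticAlgebra ℚ (2 * p) 0)
  rw [QuadraticAlgebra.norm_def] at this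
  simp only [zero_mul, add_zero] at this
  rw [sq, sq, ← mul_assoc, ← this]
  rfl

/-- A two-generator description of biquadratic fields: `ℚ(x, y)` is spanned by `1, x, y, xy`
when `x²` and `y²` are rational. -/
lemma mem_adjoin_pair {x y : ℂ} {q r : ℚ} (hx : x ^ 2 = q) (hy : y ^ 2 = r) {z : ℂ}
    (hz : z ∈ ℚ⟮x, y⟯) : ∃ a b c d : ℚ, z = a + b * x + c * y + d * (x * y) := by
  have halg : ∀ t ∈ ({x, y} : Set ℂ), IsAlgebraic ℚ t := by
    rintro t (rfl | rfl)
    · exact (isIntegral_of_sq hx).isAlgebraic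
    · exact (isIntegral_of_sq hy).isAlgebraic
  rw [← IntermediateField.mem_toSubalgebra,
    IntermediateField.adjoin_toSubalgebra_of_isAlgebraic halg] at hz
  induction hz using Algebra.adjoin_induction with
  | mem t ht =>
    rcases ht with rfl | rfl
    · exact ⟨0, 1, 0, 0, by simp⟩
    · exact ⟨0, 0, 1, 0, by simp⟩
  | algebraMap t => exact ⟨t, 0, 0, 0, by simp⟩
  | add u v _ _ hu hv =>
    obtain ⟨a, b, c, d, rfl⟩ := hu
    obtain ⟨a', b', c', d', rfl⟩ := hv
    exact ⟨a + a', b + b', c + c', d + d', by push_cast; ring⟩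
  | mul u v _ _ hu hv =>
    obtain ⟨a, b, c, d, rfl⟩ := hu
    obtain ⟨a', b', c', d', rfl⟩ := hv
    refine ⟨a * a' + b * b' * q + c * c' * r + d * d' * q * r,
      a * b' + b * a' + (c * d' + d * c') * r, a * c' + c * a' + (b * d' + d * b') * q,
      a * d' + d * a' + b * c' + c * b', ?_⟩
    push_cast
    rw [← hx, ← hy]
    ring

lemma mem_kfield {p : ℕ} {x : ℂ} : x ∈ kfield p ↔ ∃ a b c d : ℚ,
    x = ((a + b * rt p : ℝ) : ℂ) + ((c + d * rt p : ℝ) : ℂ) * Complex.I := by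
  constructor
  · intro h
    obtain ⟨a, b, c, d, rfl⟩ := mem_adjoin_pair (x := (rt p : ℂ)) (y := Complex.I) (q := 2 * p)
      (r := -1) (by rw [rt_sq_complex]; push_cast; rfl) (by simp) h
    exact ⟨a, b, c, d, by push_cast; ring⟩
  · rintro ⟨a, b, c, d, rfl⟩
    have h1 : (rt p : ℂ) ∈ kfield p := IntermediateField.subset_adjoin ℚ _ (Set.mem_insert _ _)
    have h2 : Complex.I ∈ kfield p :=
      IntermediateField.subset_adjoin ℚ _ (Set.mem_insert_of_mem _ rfl)
    have h3 : ∀ q : ℚ, (q : ℂ) ∈ kfield p := fun q => SubfieldClass.ratCast_mem _ _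
    push_cast
    exact add_mem (add_mem (h3 _) (mul_mem (h3 _) h1))
      (mul_mem (add_mem (h3 _) (mul_mem (h3 _) h1)) h2)

lemma mem_Fbiq {p : ℕ} {x : ℂ} (h : x ∈ Fbiq p) : ∃ a b c d : ℚ,
    x = ((a + b * rt p + (c + d * rt p) * Real.sqrt 2 : ℝ) : ℂ) := by
  have h2 : (Real.sqrt 2) ^ 2 = 2 := Real.sq_sqrt (by norm_num)
  have hp : (Real.sqrt p) ^ 2 = p := Real.sq_sqrt (by positivity)
  obtain ⟨a, b, c, d, rfl⟩ := mem_adjoin_pair (x := (Real.sqrt p : ℂ)) (y := (Real.sqrt 2 : ℂ))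
    (q := p) (r := 2) (by exact_mod_cast hp) (by exact_mod_cast h2) h
  -- `√p = (√(2p) / 2) · √2`
  refine ⟨a, d, c, b / 2, ?_⟩
  rw [rt_eq]
  norm_cast
  push_cast
  linear_combination (-(b : ℝ) / 2 * Real.sqrt p) * h2

/-- The ring of integers of `ℚ(√(2p))` is contained in `ℤ[√(2p)]`. -/
lemma int_coords {p : ℕ} (hp : p.Prime) (hodd : Odd p) {a b : ℚ}
    (h : IsIntegral ℤ ((a + b * rt p : ℝ) : ℂ)) : ∃ m n : ℤ, a = m ∧ b = n := by
  set z : QuadraticAlgebra ℚ (2 * p) 0 := ⟨a, b⟩ with hz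
  have hinj := quadHom_injective hodd
  have hzi : IsIntegral ℤ z := by
    have h1 : IsIntegral ℤ (quadHom p z) := by rw [quadHom_apply]; exact h
    exact (isIntegral_algHom_iff ((quadHom p).restrictScalars ℤ) hinj).1 h1
  have hzs : IsIntegral ℤ (star z) :=
    hzi.map (starRingEnd (QuadraticAlgebra ℚ (2 * p) 0)).toIntAlgHom
  have key : ∀ q : ℚ, IsIntegral ℤ (algebraMap ℚ (QuadraticAlgebra ℚ (2 * p) 0) q) →
      ∃ m : ℤ, q = m := by
    intro q hq
    rw [isIntegral_algebraMap_iff QuadraticAlgebra.algebraMap_injective] at hq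
    obtain ⟨m, hm⟩ := IsIntegrallyClosed.isIntegral_iff.1 hq
    exact ⟨m, by rw [← hm]; rfl⟩
  have htr := QuadraticAlgebra.algebraMap_trace_eq_add_star (z := z)
  have hno := QuadraticAlgebra.algebraMap_norm_eq_mul_star z
  obtain ⟨t, ht⟩ := key _ (htr ▸ hzi.add hzs)
  obtain ⟨N, hN⟩ := key _ (hno ▸ hzi.mul hzs)
  rw [QuadraticAlgebra.trace_def] at ht
  rw [QuadraticAlgebra.norm_def] at hN
  simp only [hz, zero_mul, add_zero] at ht hN
  -- `2b` is an integer because `2p (2b)²` is one and `2p` is squarefree.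
  have hB : ∃ n : ℤ, 2 * b = n := by
    have hk : (2 * p * (2 * b)) ^ 2 = ((2 * p * (t ^ 2 - 4 * N) : ℤ) : ℚ) := by
      push_cast
      rw [← hN, ← ht]
      ring
    have hki : IsIntegral ℤ (2 * p * (2 * b)) := by
      refine IsIntegral.of_pow two_pos ?_
      rw [hk]
      exact isIntegral_algebraMap (R := ℤ) (A := ℚ)
    obtain ⟨k, hk'⟩ := IsIntegrallyClosed.isIntegral_iff.1 hki
    replace hk' : (k : ℚ) = 2 * p * (2 * b) := hk'
    have hk2 : k ^ 2 = 2 * p * (t ^ 2 - 4 * N) := by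
      rw [← hk'] at hk
      exact_mod_cast hk
    have h2k : (2 : ℤ) ∣ k :=
      Int.prime_two.dvd_of_dvd_pow (n := 2) ⟨p * (t ^ 2 - 4 * N), by rw [hk2]; ring⟩
    have hpk : (p : ℤ) ∣ k :=
      (Nat.prime_iff_prime_int.1 hp).dvd_of_dvd_pow (n := 2)
        ⟨2 * (t ^ 2 - 4 * N), by rw [hk2]; ring⟩
    have hco : IsCoprime (2 : ℤ) p := by
      have : Nat.Coprime 2 p := Nat.coprime_two_left.2 hodd
      exact_mod_cast Nat.isCoprime_iff_coprime.2 this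
    obtain ⟨n, hn⟩ := hco.mul_dvd h2k hpk
    refine ⟨n, ?_⟩
    have hp0 : (p : ℚ) ≠ 0 := by exact_mod_cast hp.ne_zero
    have : (2 * p : ℚ) * (2 * b) = 2 * p * n := by
      rw [← hk', hn]; push_cast; ring
    exact mul_left_cancel₀ (by positivity) this
  obtain ⟨n, hn⟩ := hB
  have e : t ^ 2 - 2 * p * n ^ 2 = 4 * N := by
    have : (t : ℚ) ^ 2 - 2 * p * (n : ℚ) ^ 2 = 4 * N := by
      rw [← hN, ← ht, ← hn]; ring
    exact_mod_cast this
  obtain ⟨t', rfl⟩ : Even t := by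
    have : Even (t ^ 2) := ⟨p * n ^ 2 + 2 * N, by linarith⟩
    exact (Int.even_pow.1 this).1
  obtain ⟨n', rfl⟩ : Even n := by
    obtain ⟨l, rfl⟩ := hodd
    have : Even (n ^ 2) := ⟨t' ^ 2 - l * n ^ 2 - N, by push_cast at e; linarith⟩
    exact (Int.even_pow.1 this).1
  refine ⟨t', n', ?_, ?_⟩
  · push_cast at ht; linarith
  · push_cast at hn; linarith

/-! ### Units as complex numbers and the subgroup `⟨i⟩·O_{ℚ(√(2p))}ˣ` -/

/-- The value in `ℂ` of a unit of the ring of integers of `K ⊆ ℂ`. -/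
def uval (K : IntermediateField ℚ ℂ) : (𝓞 K)ˣ →* ℂ :=
  (K.val : K →* ℂ).comp ((algebraMap (𝓞 K) K : 𝓞 K →* K).comp (Units.coeHom (𝓞 K)))

lemma uval_apply {K : IntermediateField ℚ ℂ} (u : (𝓞 K)ˣ) :
    uval K u = (((u : 𝓞 K) : K) : ℂ) := rfl

lemma uval_neg {K : IntermediateField ℚ ℂ} (u : (𝓞 K)ˣ) : uval K (-u) = - uval K u := by
  simp [uval_apply]

lemma uval_mem {K : IntermediateField ℚ ℂ} (u : (𝓞 K)ˣ) : uval K u ∈ K :=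
  ((u : 𝓞 K) : K).2

lemma uval_injective (K : IntermediateField ℚ ℂ) : Function.Injective (uval K) := by
  intro u v h
  exact Units.ext (NumberField.RingOfIntegers.ext (Subtype.ext h))

lemma uval_ne_zero {K : IntermediateField ℚ ℂ} (u : (𝓞 K)ˣ) : uval K u ≠ 0 :=
  ((Group.isUnit u).map (uval K)).ne_zero

lemma uval_integral {K : IntermediateField ℚ ℂ} (u : (𝓞 K)ˣ) : IsIntegral ℤ (uval K u) :=
  (NumberField.RingOfIntegers.isIntegral_coe (u : 𝓞 K)).map (K.val.restrictScalars ℤ)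

lemma exists_unit {K : IntermediateField ℚ ℂ} {w : ℂ} (hw : w ∈ K) (h0 : w ≠ 0)
    (h1 : IsIntegral ℤ w) (h2 : IsIntegral ℤ w⁻¹) : ∃ u : (𝓞 K)ˣ, uval K u = w := by
  have hint : ∀ t : K, IsIntegral ℤ (t : ℂ) → IsIntegral ℤ t := fun t ht =>
    (isIntegral_algHom_iff (K.val.restrictScalars ℤ) K.val.injective).1 ht
  let a : 𝓞 K := ⟨⟨w, hw⟩, hint _ h1⟩
  let b : 𝓞 K := ⟨⟨w⁻¹, inv_mem hw⟩, hint _ h2⟩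
  have hab : a * b = 1 := by
    apply NumberField.RingOfIntegers.ext
    apply Subtype.ext
    exact mul_inv_cancel₀ h0
  exact ⟨⟨a, b, hab, by rw [mul_comm, hab]⟩, rfl⟩

lemma conj_integral {w : ℂ} (h : IsIntegral ℤ w) : IsIntegral ℤ (starRingEnd ℂ w) :=
  h.map (starRingEnd ℂ).toIntAlgHom

lemma integral_I : IsIntegral ℤ Complex.I := by
  refine IsIntegral.of_pow two_pos ?_
  rw [Complex.I_sq]
  exact isIntegral_one.neg

lemma exists_unit_I (p : ℕ) : ∃ u : (𝓞 (kfield p))ˣ, uval _ u = Complex.I := by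
  refine exists_unit ?_ Complex.I_ne_zero integral_I ?_
  · exact mem_kfield.2 ⟨0, 0, 1, 0, by simp⟩
  · rw [Complex.inv_I]; exact integral_I.neg

lemma mem_WE_of_real {p : ℕ} {u : (𝓞 (kfield p))ˣ}
    (h : starRingEnd ℂ (uval _ u) = uval _ u) : u ∈ WE p := by
  apply Subgroup.subset_closure
  right
  have hQ : uval _ u ∈ Q2p p := by
    obtain ⟨a, b, c, d, hu⟩ := mem_kfield.1 (uval_mem u)
    refine mem_Q2p.2 ⟨a, b, ?_⟩
    rw [hu]
    rw [hu, Complex.conj_eq_iff_im] at h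
    simp at h
    simp [h]
  obtain ⟨v, hv⟩ := exists_unit hQ (uval_ne_zero u) (uval_integral u)
    (by rw [← map_inv]; exact uval_integral _)
  exact ⟨v, hv.symm⟩

lemma conj_uval_Q2p {p : ℕ} (v : (𝓞 (Q2p p))ˣ) :
    starRingEnd ℂ (uval _ v) = uval _ v := by
  obtain ⟨a, b, h⟩ := mem_Q2p.1 (uval_mem v)
  rw [h, Complex.conj_ofReal]

/-- `⟨i⟩·O_{ℚ(√(2p))}ˣ` consists of the units whose quotient by their complex conjugate
is `±1`. -/
lemma mem_WE_iff {p : ℕ} (u : (𝓞 (kfield p))ˣ) :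
    u ∈ WE p ↔ starRingEnd ℂ (uval _ u) = uval _ u ∨ starRingEnd ℂ (uval _ u) = - uval _ u := by
  constructor
  · intro h
    induction h using Subgroup.closure_induction with
    | mem x hx =>
      rcases hx with hx | ⟨v, hv⟩
      · right
        rw [uval_apply, hx, Complex.conj_I]
      · left
        rw [← uval_apply, ← uval_apply] at hv
        rw [hv, conj_uval_Q2p]
    | one => left; simp
    | mul x y _ _ hx hy =>
      rw [map_mul, map_mul]
      rcases hx with hx | hx <;> rcases hy with hy | hy <;> rw [hx, hy] <;> simp
    | inv x _ hx =>
      rw [map_inv, map_inv₀]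
      rcases hx with hx | hx <;> rw [hx] <;> simp [inv_neg]
  · rintro (h | h)
    · exact mem_WE_of_real h
    · obtain ⟨j, hj⟩ := exists_unit_I p
      have hjW : j ∈ WE p := Subgroup.subset_closure (Or.inl hj)
      rw [← Subgroup.mul_mem_cancel_right _ hjW]
      apply mem_WE_of_real
      rw [map_mul, map_mul, h, hj, Complex.conj_I]
      ring

/-- If `α = a + b√(2p)` and `β = c + d√(2p)` satisfy `α² + β² = 1` and `2α`, `2β` are integral,
then `α` or `β` vanishes: writing `2α = A + B√(2p)` and `2β = C + D√(2p)` with integer coordinates,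
the rational part of the equation is `A² + C² + 2p(B² + D²) = 4`, where `2p ≥ 6`. -/
lemma circle_coords {p : ℕ} (hp : p.Prime) (hodd : Odd p) {a b c d : ℚ}
    (h : ((a + b * rt p) ^ 2 + (c + d * rt p) ^ 2 : ℝ) = 1)
    (h1 : IsIntegral ℤ (((2 * a : ℚ) + (2 * b : ℚ) * rt p : ℝ) : ℂ))
    (h2 : IsIntegral ℤ (((2 * c : ℚ) + (2 * d : ℚ) * rt p : ℝ) : ℂ)) :
    (a = 0 ∧ b = 0) ∨ (c = 0 ∧ d = 0) := by
  have hs := rt_sq p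
  have h' : ((a ^ 2 + 2 * p * b ^ 2 + c ^ 2 + 2 * p * d ^ 2 : ℚ) : ℝ)
      + (2 * a * b + 2 * c * d : ℚ) * rt p = (1 : ℚ) + (0 : ℚ) * rt p := by
    push_cast
    linear_combination h - ((b : ℝ) ^ 2 + d ^ 2) * hs
  obtain ⟨h3, h4⟩ := coord_unique hodd h'
  obtain ⟨A, B, hA, hB⟩ := int_coords hp hodd h1
  obtain ⟨C, D, hC, hD⟩ := int_coords hp hodd h2
  have e : A ^ 2 + 2 * p * B ^ 2 + C ^ 2 + 2 * p * D ^ 2 = 4 := by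
    have : (A : ℚ) ^ 2 + 2 * p * B ^ 2 + C ^ 2 + 2 * p * D ^ 2 = 4 := by
      rw [← hA, ← hB, ← hC, ← hD]
      linear_combination 4 * h3
    exact_mod_cast this
  have hp3 : (3 : ℤ) ≤ p := by
    have := hp.two_le
    obtain ⟨l, rfl⟩ := hodd
    omega
  have hB0 : B = 0 := by
    by_contra hne
    have : 0 < B ^ 2 := by positivity
    nlinarith [sq_nonneg A, sq_nonneg C, sq_nonneg D]
  have hD0 : D = 0 := by
    by_contra hne
    have : 0 < D ^ 2 := by positivity
    nlinarith [sq_nonneg A, sq_nonneg C, sq_nonneg B]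
  subst hB0 hD0
  have e' : A ^ 2 + C ^ 2 = 4 := by linarith
  have hA2 : A ≤ 2 := by nlinarith [sq_nonneg C]
  have hA2' : -2 ≤ A := by nlinarith [sq_nonneg C]
  have hC2 : C ≤ 2 := by nlinarith [sq_nonneg A]
  have hC2' : -2 ≤ C := by nlinarith [sq_nonneg A]
  have hAC : A = 0 ∨ C = 0 := by
    interval_cases A <;> interval_cases C <;> simp_all
  simp only [Int.cast_zero, mul_eq_zero, OfNat.ofNat_ne_zero, false_or] at hB hD
  rcases hAC with rfl | rfl
  · left; simp only [Int.cast_zero, mul_eq_zero, OfNat.ofNat_ne_zero, false_or] at hA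
    exact ⟨hA, hB⟩
  · right; simp only [Int.cast_zero, mul_eq_zero, OfNat.ofNat_ne_zero, false_or] at hC
    exact ⟨hC, hD⟩

lemma conj_mem_kfield {p : ℕ} {w : ℂ} (h : w ∈ kfield p) : starRingEnd ℂ w ∈ kfield p := by
  obtain ⟨a, b, c, d, rfl⟩ := mem_kfield.1 h
  refine mem_kfield.2 ⟨a, b, -c, -d, ?_⟩
  simp only [map_add, map_mul, Complex.conj_ofReal, Complex.conj_I]
  push_cast
  ring

/-- The quotient of a unit of `k` by its complex conjugate is a fourth root of unity, and it is
`±i` for the units outside `⟨i⟩·O_{ℚ(√(2p))}ˣ`. -/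
lemma unit_ratio {p : ℕ} (hp : p.Prime) (hodd : Odd p) (u : (𝓞 (kfield p))ˣ) :
    u ∈ WE p ∨ uval _ u = Complex.I * starRingEnd ℂ (uval _ u) ∨
      uval _ u = - Complex.I * starRingEnd ℂ (uval _ u) := by
  rw [mem_WE_iff]
  set w := uval _ u with hw
  have hw0 : w ≠ 0 := uval_ne_zero u
  have hwc : starRingEnd ℂ w ≠ 0 := by simpa using hw0
  have hwi : IsIntegral ℤ w := uval_integral u
  have hwi' : IsIntegral ℤ w⁻¹ := by rw [hw, ← map_inv]; exact uval_integral _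
  set z := w * (starRingEnd ℂ w)⁻¹ with hz
  have hzi : IsIntegral ℤ z := hwi.mul (by rw [← map_inv₀]; exact conj_integral hwi')
  have hzz : z * starRingEnd ℂ z = 1 := by
    rw [hz, map_mul, map_inv₀, Complex.conj_conj]
    field_simp
  have hzk : z ∈ kfield p := mul_mem (uval_mem u) (inv_mem (conj_mem_kfield (uval_mem u)))
  have hwz : w = z * starRingEnd ℂ w := by rw [hz]; field_simp
  obtain ⟨a, b, c, d, habcd⟩ := mem_kfield.1 hzk
  have hcz : starRingEnd ℂ z
      = ((a + b * rt p : ℝ) : ℂ) - ((c + d * rt p : ℝ) : ℂ) * Complex.I := by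
    rw [habcd]
    simp only [map_add, map_mul, Complex.conj_ofReal, Complex.conj_I]
    ring
  have h1 : ((a + b * rt p) ^ 2 + (c + d * rt p) ^ 2 : ℝ) = 1 := by
    rw [hcz, habcd] at hzz
    have : (((a + b * rt p) ^ 2 + (c + d * rt p) ^ 2 : ℝ) : ℂ) = 1 := by
      rw [← hzz]
      push_cast
      linear_combination ((c : ℂ) + d * rt p) ^ 2 * Complex.I_sq
    exact_mod_cast this
  have e1 : (((2 * a : ℚ) + (2 * b : ℚ) * rt p : ℝ) : ℂ) = z + starRingEnd ℂ z := by
    rw [hcz, habcd]; push_cast; ring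
  have e2 : (((2 * c : ℚ) + (2 * d : ℚ) * rt p : ℝ) : ℂ)
      = (z - starRingEnd ℂ z) * -Complex.I := by
    rw [hcz, habcd]; push_cast
    linear_combination (2 * ((c : ℂ) + d * rt p)) * Complex.I_sq
  have h2 := circle_coords hp hodd h1 (e1 ▸ hzi.add (conj_integral hzi))
    (e2 ▸ (hzi.sub (conj_integral hzi)).mul integral_I.neg)
  rcases h2 with ⟨rfl, rfl⟩ | ⟨rfl, rfl⟩
  · right
    have h1 : ((c : ℝ) + d * rt p) ^ 2 = 1 := by simpa using h1
    have hz1 : z = ((c + d * rt p : ℝ) : ℂ) * Complex.I := by simpa using habcd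
    rcases sq_eq_sq_iff_eq_or_eq_neg.1 (h1.trans (one_pow 2).symm) with h | h
    · left; rw [h] at hz1; rw [hz1] at hwz; simpa using hwz
    · right; rw [h] at hz1; rw [hz1] at hwz; simpa using hwz
  · left
    have h1 : ((a : ℝ) + b * rt p) ^ 2 = 1 := by simpa using h1
    have hz1 : z = ((a + b * rt p : ℝ) : ℂ) := by simpa using habcd
    rcases sq_eq_sq_iff_eq_or_eq_neg.1 (h1.trans (one_pow 2).symm) with h | h
    · left; rw [h] at hz1; rw [hz1] at hwz; simpa using hwz.symm
    · right; rw [h] at hz1; rw [hz1] at hwz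
      rw [eq_comm, neg_eq_iff_eq_neg]; simpa using hwz

/-! ### A coprime factorisation -/

/-- Coprime factorisation of `u(u+1) = 2pc²`. -/
lemma consecutive_factor {p : ℕ} (hp : p.Prime) (hodd : Odd p) {u c : ℕ}
    (h : u * (u + 1) = 2 * p * c ^ 2) : ∃ y z : ℕ, c = y * z ∧
      ((u = 2 * p * y ^ 2 ∧ u + 1 = z ^ 2) ∨ (u = y ^ 2 ∧ u + 1 = 2 * p * z ^ 2) ∨
       (u = 2 * y ^ 2 ∧ u + 1 = p * z ^ 2) ∨ (u = p * y ^ 2 ∧ u + 1 = 2 * z ^ 2)) := by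
  have hco : Nat.Coprime u (u + 1) := by simp
  have hcp : Nat.Coprime 2 p := Nat.coprime_two_left.2 hodd
  have hp0 := hp.pos
  -- It suffices to distribute the factors `2` and `p` among `u` and `u + 1`
  have key : ∀ d e u' v' : ℕ, 0 < d * e → d * e = 2 * p → u = d * u' → u + 1 = e * v' →
      ∃ y z : ℕ, c = y * z ∧ u = d * y ^ 2 ∧ u + 1 = e * z ^ 2 := by
    intro d e u' v' hde hde' hu hv
    have h1 : u' * v' = c ^ 2 := by
      have : (d * e) * (u' * v') = (d * e) * c ^ 2 := by
        rw [hde', ← h, ← hde', hv, hu]; ring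
      exact Nat.eq_of_mul_eq_mul_left hde this
    have hco' : Nat.Coprime u' v' :=
      (hco.coprime_dvd_left ⟨d, by rw [hu]; ring⟩).coprime_dvd_right ⟨e, by rw [hv]; ring⟩
    obtain ⟨y, hy⟩ := exists_eq_pow_of_mul_eq_pow (Nat.isUnit_iff.2 hco') h1
    obtain ⟨z, hz⟩ := exists_eq_pow_of_mul_eq_pow (Nat.isUnit_iff.2 hco'.symm)
      (by rw [mul_comm]; exact h1)
    refine ⟨y, z, ?_, by rw [hu, hy], by rw [hv, hz]⟩
    rw [hy, hz, ← mul_pow] at h1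
    exact (Nat.pow_left_injective two_ne_zero h1).symm
  have h2 : 2 ∣ u ∨ 2 ∣ u + 1 := by omega
  have hpd : p ∣ u ∨ p ∣ u + 1 := hp.dvd_mul.1 ⟨2 * c ^ 2, by rw [h]; ring⟩
  rcases h2 with h2 | h2 <;> rcases hpd with h3 | h3
  · obtain ⟨u', hu'⟩ := hcp.mul_dvd_of_dvd_of_dvd h2 h3
    obtain ⟨y, z, h⟩ := key (2 * p) 1 u' (u + 1) (by positivity) (by ring) hu' (by ring)
    exact ⟨y, z, h.1, Or.inl ⟨h.2.1, by simpa using h.2.2⟩⟩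
  · obtain ⟨u', hu'⟩ := h2
    obtain ⟨v', hv'⟩ := h3
    obtain ⟨y, z, h⟩ := key 2 p u' v' (by positivity) (by ring) hu' hv'
    exact ⟨y, z, h.1, Or.inr (Or.inr (Or.inl h.2))⟩
  · obtain ⟨u', hu'⟩ := h3
    obtain ⟨v', hv'⟩ := h2
    obtain ⟨y, z, h⟩ := key p 2 u' v' (by positivity) (by ring) hu' hv'
    exact ⟨y, z, h.1, Or.inr (Or.inr (Or.inr h.2))⟩
  · obtain ⟨v', hv'⟩ := hcp.mul_dvd_of_dvd_of_dvd h2 h3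
    obtain ⟨y, z, h⟩ := key 1 (2 * p) u v' (by positivity) (by ring) (by ring) hv'
    exact ⟨y, z, h.1, Or.inr (Or.inl ⟨by simpa using h.2.1, h.2.2⟩)⟩

/-! ### The fundamental unit and its square root -/

lemma norm_unit_eq {p : ℕ} (hodd : Odd p) (v : (𝓞 (Q2p p))ˣ) :
    ∃ a b : ℚ, uval _ v = ((a + b * rt p : ℝ) : ℂ) ∧
      Algebra.norm ℚ ((v : 𝓞 (Q2p p)) : Q2p p) = a ^ 2 - 2 * p * b ^ 2 := by
  obtain ⟨a, b, h⟩ := mem_Q2p.1 (uval_mem v)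
  exact ⟨a, b, h, norm_Q2p hodd _ h⟩

lemma norm_unit_cases {p : ℕ} (hp : p.Prime) (hodd : Odd p) (v : (𝓞 (Q2p p))ˣ) :
    Algebra.norm ℚ ((v : 𝓞 (Q2p p)) : Q2p p) = 1 ∨
      Algebra.norm ℚ ((v : 𝓞 (Q2p p)) : Q2p p) = -1 := by
  have key : ∀ w : (𝓞 (Q2p p))ˣ, ∃ m : ℤ,
      Algebra.norm ℚ ((w : 𝓞 (Q2p p)) : Q2p p) = m := by
    intro w
    obtain ⟨a, b, h, hn⟩ := norm_unit_eq hodd w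
    obtain ⟨m, n, rfl, rfl⟩ := int_coords hp hodd (h ▸ uval_integral w)
    exact ⟨m ^ 2 - 2 * p * n ^ 2, by rw [hn]; push_cast; ring⟩
  obtain ⟨m, hm⟩ := key v
  obtain ⟨n, hn⟩ := key v⁻¹
  have hmn : m * n = 1 := by
    have : (m : ℚ) * n = 1 := by
      rw [← hm, ← hn, ← map_mul]
      simp
    exact_mod_cast this
  rcases Int.eq_one_or_neg_one_of_mul_eq_one hmn with rfl | rfl
  · left; simpa using hm
  · right; simpa using hm

/-- A fundamental unit is not a square in `ℚ(√(2p))`. -/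
lemma fundamental_not_sq {p : ℕ} {ε : (𝓞 (Q2p p))ˣ} (hε : IsFundamentalUnit ε) {w : ℂ}
    (hw : w ∈ Q2p p) : w ^ 2 ≠ uval _ ε := by
  intro h
  obtain ⟨⟨r, hr1, hr⟩, hgen⟩ := hε
  have h0 : w ≠ 0 := by
    rintro rfl
    exact uval_ne_zero ε (by rw [← h]; simp)
  have h1 : IsIntegral ℤ w := IsIntegral.of_pow two_pos (by rw [h]; exact uval_integral ε)
  have h2 : IsIntegral ℤ w⁻¹ := IsIntegral.of_pow two_pos (by
    rw [inv_pow, h, ← map_inv]; exact uval_integral _)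
  obtain ⟨v, hv⟩ := exists_unit hw h0 h1 h2
  have hv2 : v ^ 2 = ε := uval_injective _ (by rw [map_pow, hv, h])
  obtain ⟨n, hn⟩ := hgen v
  have hsq : ε ^ (2 * n) = ε := by
    rcases hn with hn | hn
    · rw [mul_comm, zpow_mul, ← hn]; exact_mod_cast hv2
    · rw [mul_comm, zpow_mul]
      rw [hn, neg_sq] at hv2
      exact_mod_cast hv2
  have hr2 : r ^ (2 * n) = r ^ (1 : ℤ) := by
    have := congrArg (uval _) hsq
    rw [map_zpow, uval_apply, hr] at this
    rw [zpow_one]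
    exact_mod_cast this
  have := zpow_right_injective₀ (by linarith) (by linarith) hr2
  omega

/-- If the fundamental unit has norm `+1`, its square root is `x√2 + y√p` with natural numbers
`x, y`. -/
lemma sqrt_fundamental {p : ℕ} (hp : p.Prime) (hodd : Odd p) {ε : (𝓞 (Q2p p))ˣ}
    (hε : IsFundamentalUnit ε) (hN : Algebra.norm ℚ ((ε : 𝓞 (Q2p p)) : Q2p p) = 1) :
    ∃ x y : ℕ, uval _ ε = (((x * Real.sqrt 2 + y * Real.sqrt p) ^ 2 : ℝ) : ℂ) := by
  obtain ⟨a, b, hab, hn⟩ := norm_unit_eq hodd ε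
  obtain ⟨m, n, rfl, rfl⟩ := int_coords hp hodd (hab ▸ uval_integral ε)
  obtain ⟨r, hr1, hr⟩ := hε.1
  have hs := rt_sq p
  have hs0 := rt_pos hp
  rw [hN] at hn
  have e : m ^ 2 - 2 * p * n ^ 2 = 1 := by exact_mod_cast hn.symm
  have hr_real : (m : ℝ) + n * rt p = r := by
    rw [← uval_apply, hab] at hr
    exact_mod_cast hr
  have eR : ((m : ℝ) + n * rt p) * (m - n * rt p) = 1 := by
    have e' : (m : ℝ) ^ 2 - 2 * p * n ^ 2 = 1 := by exact_mod_cast e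
    linear_combination e' - (n : ℝ) ^ 2 * hs
  rw [hr_real] at eR
  -- The conjugate `m - n√(2p) = ε⁻¹` lies in `(0, 1)`.
  have c0 : 0 < (m : ℝ) - n * rt p := by
    by_contra hneg
    push Not at hneg
    nlinarith
  have c1 : (m : ℝ) - n * rt p < 1 := by nlinarith
  have hm0 : 0 < m := by
    have : (0 : ℝ) < m := by linarith
    exact_mod_cast this
  have hn0 : 0 < n := by
    have : (0 : ℝ) < n := by
      by_contra hneg
      push Not at hneg
      nlinarith
    exact_mod_cast this
  lift m to ℕ using hm0.le
  lift n to ℕ using hn0.le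
  have e' : m ^ 2 = 2 * p * n ^ 2 + 1 := by
    zify; linarith
  have hmodd : Odd m := by
    have : Odd (m ^ 2) := ⟨p * n ^ 2, by rw [e']; ring⟩
    exact Nat.Odd.of_mul_left (by rwa [sq] at this)
  obtain ⟨u, rfl⟩ := hmodd
  have hu : 2 * (u * (u + 1)) = p * n ^ 2 := by nlinarith
  have hneven : Even n := by
    have h1 : Even (p * n ^ 2) := ⟨u * (u + 1), by rw [← hu]; ring⟩
    rcases Nat.even_mul.1 h1 with h | h
    · exact absurd h (Nat.not_even_iff_odd.2 hodd)
    · exact (Nat.even_pow.1 h).1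
  obtain ⟨c, rfl⟩ := hneven
  have huc : u * (u + 1) = 2 * p * c ^ 2 := by nlinarith
  obtain ⟨y, z, rfl, hcase⟩ := consecutive_factor hp hodd huc
  have h2 : (Real.sqrt 2) ^ 2 = 2 := Real.sq_sqrt (by norm_num)
  have hp2 : (Real.sqrt p) ^ 2 = p := Real.sq_sqrt (by positivity)
  have hst := rt_eq p
  rw [hab]
  rcases hcase with ⟨h1, h3⟩ | ⟨h1, h3⟩ | ⟨h1, h3⟩ | ⟨h1, h3⟩ <;>
    have hu_real := congrArg (Nat.cast : ℕ → ℝ) h1 <;>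
    have hv_real := congrArg (Nat.cast : ℕ → ℝ) h3 <;>
    push_cast at hu_real hv_real
  -- In the first two cases `ε` is the square of an element of `ℚ(√(2p))`.
  · exfalso
    refine fundamental_not_sq hε (w := (((z : ℚ) + (y : ℚ) * rt p : ℝ) : ℂ))
      (mem_Q2p.2 ⟨z, y, rfl⟩) ?_
    rw [hab, ← Complex.ofReal_pow]
    congr 1
    push_cast
    linear_combination (y : ℝ) ^ 2 * hs - hu_real - hv_real
  · exfalso
    refine fundamental_not_sq hε (w := (((y : ℚ) + (z : ℚ) * rt p : ℝ) : ℂ))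
      (mem_Q2p.2 ⟨y, z, rfl⟩) ?_
    rw [hab, ← Complex.ofReal_pow]
    congr 1
    push_cast
    linear_combination (z : ℝ) ^ 2 * hs - hu_real - hv_real
  · refine ⟨y, z, ?_⟩
    congr 1
    rw [hst]
    push_cast
    linear_combination hu_real + hv_real - (y : ℝ) ^ 2 * h2 - (z : ℝ) ^ 2 * hp2
  · refine ⟨z, y, ?_⟩
    congr 1
    rw [hst]
    push_cast
    linear_combination hu_real + hv_real - (z : ℝ) ^ 2 * h2 - (y : ℝ) ^ 2 * hp2

/-- If `ε = (α + β√2)²` with `α, β ∈ ℚ(√(2p))`, then `ε = α² + 2β²` is totally positive, so its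
norm is `+1`. -/
lemma norm_one_of_sq {p : ℕ} (hp : p.Prime) (hodd : Odd p) (ε : (𝓞 (Q2p p))ˣ)
    {x : ℂ} (hx : x ∈ Fbiq p) (hsq : x ^ 2 = uval _ ε) :
    Algebra.norm ℚ ((ε : 𝓞 (Q2p p)) : Q2p p) = 1 := by
  refine (norm_unit_cases hp hodd ε).resolve_right fun hneg => ?_
  obtain ⟨A, B, hAB, hn⟩ := norm_unit_eq hodd ε
  obtain ⟨a, b, c, d, rfl⟩ := mem_Fbiq hx
  rw [hAB, ← Complex.ofReal_pow, Complex.ofReal_inj] at hsq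
  rw [hneg] at hn
  have hs := rt_sq p
  have h2 : (Real.sqrt 2) ^ 2 = 2 := Real.sq_sqrt (by norm_num)
  -- With `α = a + b√(2p)` and `β = c + d√(2p)`, the square `(α + β√2)²` lies in `ℚ(√(2p))`
  -- only if `αβ = 0`, since `√2` does not.
  set G : ℚ := 2 * (a * c + 2 * p * b * d) with hG
  set H : ℚ := 2 * (a * d + b * c) with hH
  set C : ℚ := A - (a ^ 2 + 2 * p * b ^ 2 + 2 * c ^ 2 + 4 * p * d ^ 2) with hC
  set D : ℚ := B - (2 * a * b + 4 * c * d) with hD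
  have key : ((G : ℝ) + H * rt p) * Real.sqrt 2 = C + D * rt p := by
    rw [hG, hH, hC, hD]
    push_cast
    linear_combination hsq - ((b : ℝ) ^ 2 + 2 * d ^ 2 + 2 * b * d * Real.sqrt 2) * hs
      - ((c : ℝ) + d * rt p) ^ 2 * h2
  have hGH : G = 0 ∧ H = 0 := by
    by_contra hne
    have hnorm : G ^ 2 - 2 * p * H ^ 2 ≠ 0 := by
      intro h0
      by_cases hH0 : H = 0
      · rw [hH0] at h0
        exact hne ⟨by simpa using h0, hH0⟩
      · exact rat_sq_ne hodd G H hH0 (by linarith)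
    have hnR : (G : ℝ) ^ 2 - 2 * p * H ^ 2 ≠ 0 := by exact_mod_cast hnorm
    apply sqrt_two_ne hp hodd ((C * G - 2 * p * D * H) / (G ^ 2 - 2 * p * H ^ 2))
      ((D * G - C * H) / (G ^ 2 - 2 * p * H ^ 2))
    push_cast
    field_simp
    linear_combination ((G : ℝ) - H * rt p) * key + (H : ℝ) * (H * Real.sqrt 2 - D) * hs
  have hCD : A = a ^ 2 + 2 * p * b ^ 2 + 2 * c ^ 2 + 4 * p * d ^ 2 ∧
      B = 2 * a * b + 4 * c * d := by
    rw [hGH.1, hGH.2] at key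
    have := coord_unique hodd (a := 0) (b := 0) (c := C) (d := D) (by simpa using key)
    constructor
    · linarith [this.1]
    · linarith [this.2]
  have pos : (0 : ℝ) ≤ (A + B * rt p) * (A - B * rt p) := by
    rw [hCD.1, hCD.2]
    have e1 : ((a ^ 2 + 2 * p * b ^ 2 + 2 * c ^ 2 + 4 * p * d ^ 2 : ℚ) : ℝ)
        + (2 * a * b + 4 * c * d : ℚ) * rt p
        = (a + b * rt p) ^ 2 + 2 * (c + d * rt p) ^ 2 := by
      push_cast
      linear_combination (-(b : ℝ) ^ 2 - 2 * d ^ 2) * hs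
    have e2 : ((a ^ 2 + 2 * p * b ^ 2 + 2 * c ^ 2 + 4 * p * d ^ 2 : ℚ) : ℝ)
        - (2 * a * b + 4 * c * d : ℚ) * rt p
        = (a - b * rt p) ^ 2 + 2 * (c - d * rt p) ^ 2 := by
      push_cast
      linear_combination (-(b : ℝ) ^ 2 - 2 * d ^ 2) * hs
    rw [e1, e2]
    positivity
  have hnR : (A : ℝ) ^ 2 - 2 * p * B ^ 2 = -1 := by exact_mod_cast hn.symm
  nlinarith

/-! ### The unit index -/

/-- When `N(ε) = 1`, some unit `η` of `k` satisfies `η² = iε` and `conj η = -iη`; multiplication by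
`η` exchanges the two classes of units modulo `⟨i⟩·O_{ℚ(√(2p))}ˣ`. -/
lemma index_two_of_norm_one {p : ℕ} (hp : p.Prime) (hodd : Odd p) {ε : (𝓞 (Q2p p))ˣ}
    (hε : IsFundamentalUnit ε) (hN : Algebra.norm ℚ ((ε : 𝓞 (Q2p p)) : Q2p p) = 1) :
    (WE p).index = 2 := by
  obtain ⟨x, y, hxy⟩ := sqrt_fundamental hp hodd hε hN
  have h2 : (Real.sqrt 2) ^ 2 = 2 := Real.sq_sqrt (by norm_num)
  -- `η = (1 + i)(x√2 + y√p)/√2` is a square root of `iε` in `k`.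
  set t : ℝ := x + y / 2 * rt p with ht
  set η : ℂ := (1 + Complex.I) * (t : ℂ) with hη
  have ht2 : 2 * (t : ℂ) ^ 2 = uval _ ε := by
    rw [hxy]
    have : 2 * t ^ 2 = (x * Real.sqrt 2 + y * Real.sqrt p) ^ 2 := by
      rw [ht, rt_eq]
      linear_combination (-(x : ℝ) ^ 2 + (y : ℝ) ^ 2 / 2 * Real.sqrt p ^ 2) * h2
    exact_mod_cast congrArg (fun r : ℝ => (r : ℂ)) this
  have hη2 : η ^ 2 = Complex.I * uval _ ε := by
    rw [hη, ← ht2]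
    linear_combination (t : ℂ) ^ 2 * Complex.I_sq
  have hη0 : η ≠ 0 := by
    intro h
    rw [h] at hη2
    exact mul_ne_zero Complex.I_ne_zero (uval_ne_zero ε) (by rw [← hη2]; simp)
  have hηk : η ∈ kfield p := mem_kfield.2 ⟨x, y / 2, x, y / 2, by
    rw [hη, ht]; push_cast; ring⟩
  obtain ⟨u, hu⟩ := exists_unit hηk hη0
    (IsIntegral.of_pow two_pos (by rw [hη2]; exact integral_I.mul (uval_integral ε)))
    (IsIntegral.of_pow two_pos (by
      rw [inv_pow, hη2, mul_inv, Complex.inv_I, ← map_inv]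
      exact integral_I.neg.mul (uval_integral _)))
  have hcη : starRingEnd ℂ η = -Complex.I * η := by
    rw [hη]
    simp only [map_mul, map_add, map_one, Complex.conj_I, Complex.conj_ofReal]
    linear_combination (t : ℂ) * Complex.I_sq
  rw [Subgroup.index_eq_two_iff]
  refine ⟨u, fun v => ?_⟩
  have hv0 : uval _ v ≠ 0 := uval_ne_zero v
  have hmul : uval _ (v * u) = uval _ v * η := by rw [map_mul, hu]
  have hne1 : (1 : ℂ) ≠ Complex.I := fun h => by simpa using congrArg Complex.im h
  have hne2 : (1 : ℂ) ≠ -Complex.I := fun h => by simpa using congrArg Complex.im h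
  by_cases hv : v ∈ WE p
  · right
    refine ⟨hv, fun hvu => ?_⟩
    rw [mem_WE_iff] at hv hvu
    rw [hmul, map_mul, hcη] at hvu
    have hX : uval _ v * η ≠ 0 := mul_ne_zero hv0 hη0
    rcases hv with hv | hv <;> rcases hvu with hvu | hvu <;> rw [hv] at hvu
    · exact hne2 (mul_right_cancel₀ hX (by linear_combination -hvu))
    · exact hne1 (mul_right_cancel₀ hX (by linear_combination hvu))
    · exact hne1 (mul_right_cancel₀ hX (by linear_combination -hvu))
    · exact hne2 (mul_right_cancel₀ hX (by linear_combination hvu))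
  · left
    refine ⟨?_, hv⟩
    rw [mem_WE_iff, hmul, map_mul, hcη]
    rcases (unit_ratio hp hodd v).resolve_left hv with h | h
    · right
      linear_combination η * h
    · left
      linear_combination -η * h

/-- `k` contains no primitive eighth root of unity. -/
lemma sq_ne_I {p : ℕ} (hp : p.Prime) (hodd : Odd p) {t : ℂ} (ht : t ∈ kfield p) :
    t ^ 2 ≠ Complex.I ∧ t ^ 2 ≠ -Complex.I := by
  have key : ∀ x ∈ kfield p, x ^ 2 ≠ 2 := by
    intro x hx h
    have h2 : (Real.sqrt 2 : ℂ) ^ 2 = 2 := by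
      exact_mod_cast Real.sq_sqrt (show (0 : ℝ) ≤ 2 by norm_num)
    have hmem : (Real.sqrt 2 : ℂ) ∈ kfield p := by
      rcases sq_eq_sq_iff_eq_or_eq_neg.1 (h.trans h2.symm) with rfl | rfl
      · exact hx
      · simpa using neg_mem hx
    obtain ⟨a, b, c, d, habcd⟩ := mem_kfield.1 hmem
    refine sqrt_two_ne hp hodd a b ?_
    simpa using congrArg Complex.re habcd
  have h1I : (1 + Complex.I) ∈ kfield p := mem_kfield.2 ⟨1, 0, 1, 0, by simp⟩
  have h1I' : (1 - Complex.I) ∈ kfield p := mem_kfield.2 ⟨1, 0, -1, 0, by simp [sub_eq_add_neg]⟩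
  constructor
  · intro h
    refine key _ (mul_mem ht h1I') ?_
    linear_combination (1 - Complex.I) ^ 2 * h + (Complex.I - 2) * Complex.I_sq
  · intro h
    refine key _ (mul_mem ht h1I) ?_
    linear_combination (1 + Complex.I) ^ 2 * h + (-Complex.I - 2) * Complex.I_sq

/-- A unit `u` outside `⟨i⟩·O_{ℚ(√(2p))}ˣ` has `u² = ±i·ε^n` with `ε^n = u · conj u` totally
positive. If `N(ε) = -1`, then `n` is even and `k` would contain a primitive eighth root of
unity. -/
lemma norm_one_of_index_two {p : ℕ} (hp : p.Prime) (hodd : Odd p) {ε : (𝓞 (Q2p p))ˣ}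
    (hε : IsFundamentalUnit ε) (hidx : (WE p).index = 2) :
    Algebra.norm ℚ ((ε : 𝓞 (Q2p p)) : Q2p p) = 1 := by
  refine (norm_unit_cases hp hodd ε).resolve_right fun hneg => ?_
  obtain ⟨u, hu⟩ : ∃ u, u ∉ WE p := by
    by_contra hall
    push Not at hall
    rw [(Subgroup.eq_top_iff' _).2 hall, Subgroup.index_top] at hidx
    omega
  have hratio := (unit_ratio hp hodd u).resolve_left hu
  have hw0 : uval _ u ≠ 0 := uval_ne_zero u
  have hs := rt_sq p
  obtain ⟨a, b, c, d, habcd⟩ := mem_kfield.1 (uval_mem u)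
  -- `A + B√(2p)` is the relative norm `u · conj u`, a totally positive unit.
  set A : ℚ := a ^ 2 + 2 * p * b ^ 2 + c ^ 2 + 2 * p * d ^ 2 with hA
  set B : ℚ := 2 * a * b + 2 * c * d with hB
  have e1 : ((A : ℝ) + B * rt p) = (a + b * rt p) ^ 2 + (c + d * rt p) ^ 2 := by
    rw [hA, hB]; push_cast
    linear_combination (-(b : ℝ) ^ 2 - d ^ 2) * hs
  have e2 : ((A : ℝ) - B * rt p) = (a - b * rt p) ^ 2 + (c - d * rt p) ^ 2 := by
    rw [hA, hB]; push_cast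
    linear_combination (-(b : ℝ) ^ 2 - d ^ 2) * hs
  have hww : uval _ u * starRingEnd ℂ (uval _ u) = ((A + B * rt p : ℝ) : ℂ) := by
    rw [e1, habcd]
    simp only [map_add, map_mul, Complex.conj_ofReal, Complex.conj_I]
    push_cast
    linear_combination (-((c : ℂ) + d * rt p) ^ 2) * Complex.I_sq
  obtain ⟨v, hv⟩ := exists_unit (K := Q2p p) (w := ((A + B * rt p : ℝ) : ℂ))
    (mem_Q2p.2 ⟨A, B, rfl⟩)
    (by rw [← hww]; exact mul_ne_zero hw0 (by simpa using hw0))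
    (by rw [← hww]; exact (uval_integral u).mul (conj_integral (uval_integral u)))
    (by
      rw [← hww, mul_inv, ← map_inv₀ (starRingEnd ℂ), ← map_inv (uval _) u]
      exact (uval_integral _).mul (conj_integral (uval_integral _)))
  have hvn : Algebra.norm ℚ ((v : 𝓞 (Q2p p)) : Q2p p) = 1 := by
    refine (norm_unit_cases hp hodd v).resolve_right fun hvneg => ?_
    have hnv := norm_Q2p hodd ((v : 𝓞 (Q2p p)) : Q2p p) hv
    rw [hvneg] at hnv
    have hR : (A : ℝ) ^ 2 - 2 * p * B ^ 2 = -1 := by exact_mod_cast hnv.symm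
    have pos : (0 : ℝ) ≤ (A + B * rt p) * (A - B * rt p) := by
      rw [e1, e2]; positivity
    nlinarith
  obtain ⟨⟨r, hr1, hr⟩, hgen⟩ := hε
  have hr0 : 0 < r := by linarith
  obtain ⟨n, hn⟩ := hgen v
  -- positivity excludes the sign `-`
  have hvn' : v = ε ^ n := by
    refine hn.resolve_right fun h => ?_
    have h1 := congrArg (uval _) h
    rw [hv, uval_neg, map_zpow, uval_apply, hr] at h1
    have h2 : (A : ℝ) + B * rt p = - r ^ n := by exact_mod_cast h1
    have h3 : 0 < r ^ n := zpow_pos hr0 n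
    rw [e1] at h2
    nlinarith [sq_nonneg ((a : ℝ) + b * rt p), sq_nonneg ((c : ℝ) + d * rt p)]
  have hne : Even n := by
    by_contra hno
    rw [Int.not_even_iff_odd] at hno
    have h1 : Algebra.norm ℚ ((v : 𝓞 (Q2p p)) : Q2p p) = (-1) ^ n := by
      let φ : (𝓞 (Q2p p))ˣ →* ℚ := (Algebra.norm ℚ).comp
        ((algebraMap (𝓞 (Q2p p)) (Q2p p) : 𝓞 (Q2p p) →* Q2p p).comp (Units.coeHom (𝓞 (Q2p p))))
      rw [hvn', ← hneg]
      exact map_zpow φ ε n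
    rw [hvn, hno.neg_one_zpow] at h1
    norm_num at h1
  obtain ⟨m, rfl⟩ := hne
  -- `t = u / ε^m` satisfies `t² = ±i`
  have hεk : ∀ v : (𝓞 (Q2p p))ˣ, uval _ v ∈ kfield p := by
    intro v
    obtain ⟨a, b, h⟩ := mem_Q2p.1 (uval_mem v)
    exact mem_kfield.2 ⟨a, b, 0, 0, by simp [h]⟩
  have htk : uval _ u * (uval _ (ε ^ m))⁻¹ ∈ kfield p :=
    mul_mem (uval_mem u) (inv_mem (hεk _))
  have hE0 : uval _ (ε ^ m) ≠ 0 := uval_ne_zero _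
  have hE : uval _ u * starRingEnd ℂ (uval _ u) = uval _ (ε ^ m) ^ 2 := by
    rw [hww, ← hv, hvn', sq, ← map_mul, zpow_add]
  obtain ⟨n1, n2⟩ := sq_ne_I hp hodd htk
  rcases hratio with h | h
  · apply n1
    rw [mul_pow, inv_pow, ← div_eq_mul_inv, div_eq_iff (pow_ne_zero 2 hE0), ← hE]
    linear_combination uval _ u * h
  · apply n2
    rw [mul_pow, inv_pow, ← div_eq_mul_inv, div_eq_iff (pow_ne_zero 2 hE0), ← hE]
    linear_combination uval _ u * h

theorem statement_6 (p : ℕ) (hp : p.Prime) (hodd : Odd p)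
    (ε : (𝓞 (Q2p p))ˣ) (hε : IsFundamentalUnit ε) :
    ((∃ x : ℂ, x ∈ Fbiq p ∧ x ^ 2 = (((ε : 𝓞 (Q2p p)) : Q2p p) : ℂ)) ↔ (WE p).index = 2) ∧
    ((WE p).index = 2 ↔ Algebra.norm ℚ ((ε : 𝓞 (Q2p p)) : Q2p p) = 1) := by
  have hbc : (WE p).index = 2 ↔ Algebra.norm ℚ ((ε : 𝓞 (Q2p p)) : Q2p p) = 1 :=
    ⟨norm_one_of_index_two hp hodd hε, index_two_of_norm_one hp hodd hε⟩
  refine ⟨?_, hbc⟩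
  rw [hbc]
  constructor
  · rintro ⟨x, hx, hsq⟩
    exact norm_one_of_sq hp hodd ε hx hsq
  · intro hN
    obtain ⟨x, y, hxy⟩ := sqrt_fundamental hp hodd hε hN
    refine ⟨((x * Real.sqrt 2 + y * Real.sqrt p : ℝ) : ℂ), ?_, ?_⟩
    · have h1 : (Real.sqrt p : ℂ) ∈ Fbiq p :=
        IntermediateField.subset_adjoin ℚ _ (Set.mem_insert _ _)
      have h2 : (Real.sqrt 2 : ℂ) ∈ Fbiq p :=
        IntermediateField.subset_adjoin ℚ _ (Set.mem_insert_of_mem _ rfl)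
      push_cast
      exact add_mem (mul_mem (_root_.natCast_mem _ _) h2) (mul_mem (_root_.natCast_mem _ _) h1)
    · rw [← uval_apply, hxy, Complex.ofReal_pow]
end
end

section
/- Let p be a prime with p ≡ 1 (mod 8). Then there exist integers x, y with p = x² + 32y² if and only if (2/p)₄ = (p/2)₄. -/
/-!
The prime `p ≡ 1 (mod 8)` is of the form `a² + 8c²`: since `-2` is a square modulo `p`, Thue's
pigeonhole argument gives `p = a² + 2b²`, and `b` is even by reduction modulo `8`.

For any such representation `-a² ≡ 2(2c)² (mod p)`. Raising this to the power `(p-1)/4`, which is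
even, expresses `2^((p-1)/4)` through the Legendre symbols of `a`, `2` and `c` modulo `p`.
Quadratic reciprocity for Jacobi symbols evaluates them: `(2/p) = (c/p) = 1`, and
`(a/p) = (p/a) = (2(2c)²/a) = (2/a)`, so `2^((p-1)/4) = (2/a)`.
Now `(2/a) = 1` iff `a² ≡ 1 (mod 16)`, while `p ≡ a² + 8c (mod 16)`. Hence
`2^((p-1)/4) = (-1)^((p-1)/8)` iff `c` is even, for *every* representation `p = a² + 8c²`
(`quartic_iff_even`). Both directions of the theorem follow, and uniqueness of the representation
is not needed.
-/

/-- Thue's argument: a prime modulo which `-2` is a square is of the form `u² + 2v²`. -/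
theorem exists_sq_add_two_mul_sq (p : ℕ) (hp : p.Prime) (k : ZMod p) (hk : -2 = k * k) :
    ∃ u v : ℤ, (p : ℤ) = u ^ 2 + 2 * v ^ 2 := by
  have := Fact.mk hp
  set n := Nat.sqrt p with hn
  have hn1 : p < (n + 1) * (n + 1) := Nat.lt_succ_sqrt p
  have hn2 : n * n < p := by
    refine lt_of_le_of_ne (Nat.sqrt_le p) fun h => ?_
    exact (Nat.prime_iff.mp hp).irreducible.not_isSquare ⟨n, h.symm⟩
  -- `(n + 1)²` pairs, but only `p` residue classes
  obtain ⟨s, -, t, -, hst, hf⟩ := Finset.exists_ne_map_eq_of_card_lt_of_maps_to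
    (s := (Finset.univ : Finset (Fin (n + 1) × Fin (n + 1))))
    (t := (Finset.univ : Finset (ZMod p)))
    (f := fun z => ((z.1 : ℕ) : ZMod p) - k * ((z.2 : ℕ) : ZMod p))
    (by simpa [ZMod.card] using hn1) (by intro x _; simp)
  obtain ⟨⟨s1, hs1⟩, ⟨s2, hs2⟩⟩ := s
  obtain ⟨⟨t1, ht1⟩, ⟨t2, ht2⟩⟩ := t
  simp only [ne_eq, Prod.mk.injEq, Fin.mk.injEq] at hst hf
  obtain ⟨u, hu⟩ : ∃ u : ℤ, u = (s1 : ℤ) - t1 := ⟨_, rfl⟩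
  obtain ⟨v, hv⟩ : ∃ v : ℤ, v = (s2 : ℤ) - t2 := ⟨_, rfl⟩
  have hdvd : (p : ℤ) ∣ u ^ 2 + 2 * v ^ 2 := by
    rw [← ZMod.intCast_zmod_eq_zero_iff_dvd]
    have huv : (u : ZMod p) = k * v := by
      rw [hu, hv]; push_cast; linear_combination hf
    push_cast
    rw [huv]
    linear_combination (-(v : ZMod p) ^ 2) * hk
  have hn2' : (n : ℤ) * n < p := by exact_mod_cast hn2
  have hu2 : u ^ 2 < p := by
    have h1 : u ≤ n := by omega
    have h2 : -(n : ℤ) ≤ u := by omega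
    nlinarith
  have hv2 : v ^ 2 < p := by
    have h1 : v ≤ n := by omega
    have h2 : -(n : ℤ) ≤ v := by omega
    nlinarith
  have hpos : 0 < u ^ 2 + 2 * v ^ 2 := by
    rcases eq_or_ne u 0 with h | h
    · have : v ≠ 0 := by
        rintro rfl
        omega
      positivity
    · positivity
  obtain ⟨w, hw⟩ := hdvd
  have hp0 : (0 : ℤ) < p := by exact_mod_cast hp.pos
  have hw0 : 0 < w := by
    by_contra h
    nlinarith
  have hw3 : w < 3 := by
    by_contra h
    nlinarith
  obtain rfl | rfl : w = 1 ∨ w = 2 := by omega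
  · exact ⟨u, v, by linarith⟩
  · have hev : Even u := by
      have h : Even (u ^ 2) := ⟨p - v ^ 2, by linarith⟩
      exact (Int.even_pow.mp h).1
    obtain ⟨r, rfl⟩ := hev
    exact ⟨v, r, by linarith⟩

/-- `(c/p) = 1`: its factors `2` have `(2/p) = 1`, and its odd part `d` has
`(d/p) = (p/d) = (a²/d) = 1` by reciprocity. -/
theorem jacobiSym_divisor_eq_one (p a c : ℕ) (hp8 : p % 8 = 1)
    (h : p = a ^ 2 + 8 * c ^ 2) (hc0 : c ≠ 0) (hac : Nat.Coprime a c) :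
    jacobiSym c p = 1 := by
  have hodd : Odd p := Nat.odd_iff.mpr (by omega)
  have h2 : jacobiSym 2 p = 1 := by
    rw [jacobiSym.at_two hodd, ZMod.χ₈_nat_mod_eight, hp8]; rfl
  obtain ⟨k, d, hd, rfl⟩ := Nat.exists_eq_two_pow_mul_odd hc0
  have hdp : jacobiSym d p = 1 := by
    rw [← jacobiSym.quadratic_reciprocity_one_mod_four (by omega) hd, jacobiSym.mod_left]
    have : ((p : ℤ) % d) = ((a : ℤ) ^ 2) % d := by
      rw [h]; push_cast
      exact (Int.emod_emod_of_dvd _ (dvd_refl _)).symm.trans (by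
        rw [show (a : ℤ) ^ 2 + 8 * (2 ^ k * d) ^ 2 = a ^ 2 + d * (8 * 2 ^ (2 * k) * d) by ring]
        simp)
    rw [this, ← jacobiSym.mod_left]
    exact jacobiSym.sq_one' (by
      rw [Int.gcd_natCast_natCast]
      exact Nat.Coprime.coprime_mul_left_right hac)
  push_cast
  rw [jacobiSym.mul_left, jacobiSym.pow_left, h2, hdp]; simp

/-- `(a/p) = (2/a)` by reciprocity, since `p ≡ 2(2c)² (mod a)`. -/
theorem jacobiSym_base_eq (p a c : ℕ) (hp8 : p % 8 = 1)
    (h : p = a ^ 2 + 8 * c ^ 2) (ha : Odd a) (hac : Nat.Coprime a c) :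
    jacobiSym a p = ZMod.χ₈ a := by
  rw [← jacobiSym.quadratic_reciprocity_one_mod_four (by omega) ha, ← jacobiSym.at_two ha,
    jacobiSym.mod_left]
  have : ((p : ℤ) % a) = (2 * ((2 * c : ℕ) : ℤ) ^ 2) % a := by
    rw [h]; push_cast
    rw [show (a : ℤ) ^ 2 + 8 * c ^ 2 = 2 * (2 * c) ^ 2 + a * a by ring]
    simp
  rw [this, ← jacobiSym.mod_left, jacobiSym.mul_left]
  rw [jacobiSym.sq_one' (by
    rw [Int.gcd_natCast_natCast]
    exact Nat.Coprime.mul_left (Nat.coprime_two_left.mpr ha) hac.symm), mul_one]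

/-- The quartic symbol of `2` is `(2/a)` whenever `p = a² + 8c²`. -/
theorem two_pow_quarter (p a c : ℕ) (hp : p.Prime) (hp8 : p % 8 = 1)
    (h : p = a ^ 2 + 8 * c ^ 2) (ha : Odd a) :
    (2 : ZMod p) ^ ((p - 1) / 4) = ((ZMod.χ₈ a : ℤ) : ZMod p) := by
  have := Fact.mk hp
  have hc0 : c ≠ 0 := by
    rintro rfl
    exact (Nat.prime_iff.mp hp).irreducible.not_isSquare ⟨a, by rw [h]; ring⟩
  have hac : Nat.Coprime a c := by
    -- a common prime factor `q` would give `q² ∣ p`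
    refine Nat.Coprime.symm (Nat.coprime_of_dvd fun q hq h1 h2 => ?_)
    have h3 : q ^ 2 ∣ p := by
      rw [h]
      exact dvd_add (pow_dvd_pow_of_dvd h2 2) ((pow_dvd_pow_of_dvd h1 2).mul_left 8)
    have h4 : q = p := (Nat.prime_dvd_prime_iff_eq hq hp).mp ((dvd_pow_self q two_ne_zero).trans h3)
    have h5 := Nat.le_of_dvd hp.pos h3
    rw [h4] at h5
    nlinarith [hp.two_le]
  have key : ∀ z : ℤ, ((jacobiSym z p : ℤ) : ZMod p) = (z : ZMod p) ^ (p / 2) := by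
    intro z
    rw [← jacobiSym.legendreSym.to_jacobiSym, legendreSym.eq_pow]
  have e2 : jacobiSym 2 p = 1 := by
    rw [jacobiSym.at_two (Nat.odd_iff.mpr (by omega)), ZMod.χ₈_nat_mod_eight, hp8]; rfl
  have h2 := key 2
  have hc := key c
  have ha' := key a
  rw [e2] at h2
  rw [jacobiSym_divisor_eq_one p a c hp8 h hc0 hac] at hc
  rw [jacobiSym_base_eq p a c hp8 h ha hac] at ha'
  obtain ⟨m, hm⟩ : ∃ m, p = 8 * m + 1 := ⟨p / 8, by omega⟩
  have q1 : p / 2 = 2 * (2 * m) := by omega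
  have q2 : (p - 1) / 4 = 2 * m := by omega
  rw [q1] at h2 hc ha'
  push_cast at h2 hc ha'
  rw [q2, ha']
  have hz : (a : ZMod p) ^ 2 + 8 * (c : ZMod p) ^ 2 = 0 := by
    have := congrArg (Nat.cast : ℕ → ZMod p) h
    push_cast at this
    rw [← this]; simp
  calc (2 : ZMod p) ^ (2 * m)
      = 2 ^ (2 * m) * 2 ^ (2 * (2 * m)) * (c : ZMod p) ^ (2 * (2 * m)) := by
        rw [← h2, ← hc]; ring
    _ = (-(8 * (c : ZMod p) ^ 2)) ^ (2 * m) := by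
        rw [Even.neg_pow ⟨m, by ring⟩, pow_mul 2 2 (2 * m), pow_mul (c : ZMod p) 2 (2 * m),
          ← mul_pow, ← mul_pow]
        norm_num
    _ = (a : ZMod p) ^ (2 * (2 * m)) := by
        rw [pow_mul (a : ZMod p) 2 (2 * m)]
        congr 1
        linear_combination -hz

/-- The criterion holds for any given representation `p = a² + 8c²`: both sides of the equation are
signs, `(2/a)` and `(-1)^((p-1)/8)`, decided by `a²` and `p ≡ a² + 8c²` modulo `16`. -/
theorem quartic_iff_even (p a c : ℕ) (hp : p.Prime) (hp8 : p % 8 = 1)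
    (h : p = a ^ 2 + 8 * c ^ 2) :
    (2 : ZMod p) ^ ((p - 1) / 4) = (-1 : ZMod p) ^ ((p - 1) / 8) ↔ Even c := by
  have := Fact.mk hp
  have : Fact (2 < p) := ⟨by have := hp.two_le; omega⟩
  have hne : (-1 : ZMod p) ≠ 1 := ZMod.neg_one_ne_one
  have ha : Odd a := by
    have h1 : Odd (a ^ 2) := Nat.odd_iff.mpr (by omega)
    exact (Nat.odd_pow_iff two_ne_zero).mp h1
  rw [two_pow_quarter p a c hp hp8 h ha, ZMod.χ₈_nat_eq_if_mod_eight]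
  have ha2 := Nat.odd_iff.mp ha
  have hsq : (a % 8 = 1 ∨ a % 8 = 7) ∧ a ^ 2 % 16 = 1 ∨
      ¬ (a % 8 = 1 ∨ a % 8 = 7) ∧ a ^ 2 % 16 = 9 := by
    have : a % 16 < 16 := Nat.mod_lt _ (by norm_num)
    rw [Nat.pow_mod, ← Nat.mod_mod_of_dvd a (show 8 ∣ 16 by norm_num)]
    rw [← Nat.mod_mod_of_dvd a (show 2 ∣ 16 by norm_num)] at ha2
    generalize a % 16 = r at *
    interval_cases r <;> simp_all
  have hpar : Even c ∧ c ^ 2 % 2 = 0 ∨ ¬ Even c ∧ c ^ 2 % 2 = 1 := by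
    rcases Nat.even_or_odd c with hc | hc
    · exact Or.inl ⟨hc, Nat.even_iff.mp (hc.pow_of_ne_zero two_ne_zero)⟩
    · exact Or.inr ⟨Nat.not_even_iff_odd.mpr hc, Nat.odd_iff.mp hc.pow⟩
  have hodd : ¬ a % 2 = 0 := by omega
  rcases hsq with ⟨h1, h3⟩ | ⟨h1, h3⟩ <;> rcases hpar with ⟨h4, h5⟩ | ⟨h4, h5⟩
  · rw [Even.neg_one_pow (Nat.even_iff.mpr (by omega))]; simp [hodd, h1, h4]
  · rw [Odd.neg_one_pow (Nat.odd_iff.mpr (by omega))]; simp [hodd, h1, h4, hne.symm]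
  · rw [Odd.neg_one_pow (Nat.odd_iff.mpr (by omega))]; simp [hodd, h1, h4]
  · rw [Even.neg_one_pow (Nat.even_iff.mpr (by omega))]; simp [hodd, h1, h4, hne]

theorem statement_8 (p : ℕ) (hp : p.Prime) (hp8 : p % 8 = 1) :
    (∃ x y : ℤ, (p : ℤ) = x ^ 2 + 32 * y ^ 2) ↔
      (2 : ZMod p) ^ ((p - 1) / 4) = (-1 : ZMod p) ^ ((p - 1) / 8) := by
  have := Fact.mk hp
  constructor
  · rintro ⟨x, y, h⟩
    refine (quartic_iff_even p x.natAbs (2 * y.natAbs) hp hp8 ?_).mpr (even_two_mul _)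
    zify
    rw [mul_pow, sq_abs, sq_abs, h]; ring
  · intro hq
    obtain ⟨k, hk⟩ := (ZMod.exists_sq_eq_neg_two_iff (p := p) (by omega)).mpr (Or.inl hp8)
    obtain ⟨u, v, huv⟩ := exists_sq_add_two_mul_sq p hp k hk
    have hv : Even v := by
      by_contra hv
      have h1 := Int.sq_mod_four_eq_one_of_odd (Int.not_even_iff_odd.mp hv)
      rcases Int.even_or_odd u with ⟨r, hr⟩ | hu
      · rw [hr, show (r + r) ^ 2 = 2 * (2 * r ^ 2) by ring] at huv
        omega
      · have h2 := Int.sq_mod_four_eq_one_of_odd hu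
        omega
    obtain ⟨w, rfl⟩ := hv
    have hrep : p = u.natAbs ^ 2 + 8 * w.natAbs ^ 2 := by
      zify
      rw [sq_abs, sq_abs, huv]; ring
    obtain ⟨y, hy⟩ := Int.natAbs_even.mp ((quartic_iff_even p _ _ hp hp8 hrep).mp hq)
    exact ⟨u, y, by rw [huv, hy]; ring⟩
end
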